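/- Every weakly chordal graph that is not a complete graph contains a two-pair. -/

import Mathlib

open SimpleGraph

/-- `G` has an induced (chordless) cycle of length `n`. -/
def HasInducedCycle {V : Type*} (G : SimpleGraph V) (n : ℕ) : Prop :=
  Nonempty (SimpleGraph.cycleGraph n ↪g G)

/-- `G` is chordal: it has no induced cycle of length 4 or more. -/
def Chordal {V : Type*} (G : SimpleGraph V) : Prop :=
  ∀ n, 4 ≤ n → ¬ HasInducedCycle G n

/-- `G` is weakly chordal: neither `G` nor its complement has an induced cycle
of length 5 or more. -/
def WeaklyChordal {V : Type*} (G : SimpleGraph V) : Prop :=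
  (∀ n, 5 ≤ n → ¬ HasInducedCycle G n) ∧ (∀ n, 5 ≤ n → ¬ HasInducedCycle Gᶜ n)

/-- `G` has an induced (chordless) path of length `ℓ` (i.e. with `ℓ` edges)
from `u` to `v`. -/
def HasInducedPath {V : Type*} (G : SimpleGraph V) (u v : V) (ℓ : ℕ) : Prop :=
  ∃ f : SimpleGraph.pathGraph (ℓ + 1) ↪g G, f 0 = u ∧ f (Fin.last ℓ) = v

/-- `{u, v}` is a two-pair of `G`: `u` and `v` are distinct, non-adjacent, and
every induced path between them has exactly two edges. -/
def TwoPair {V : Type*} (G : SimpleGraph V) (u v : V) : Prop :=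
  u ≠ v ∧ ¬ G.Adj u v ∧ ∀ ℓ, HasInducedPath G u v ℓ → ℓ = 2

/-!
Work in the complement, so that a two-pair becomes an edge `xy` such that no induced path of length
at least three joins `x` and `y` in the complement. Call a component `H`, having an edge, of the
part of the graph far from a connected set `J` a handle. If there is no handle, every edge will do:
the first three vertices `p 0, p 1, p 2` of a long induced path of the complement give the edge
`p 0, p 2` and the far vertex `p 1`, hence a handle.

Otherwise take a minimal handle `H` and, by induction, a suitable edge `xy` of the subgraph induced
by `H`. A long induced path from `x` to `y` in the complement has to leave `H`, and the vertices of
such an excursion have neighbors both in `H` and in `J`. If the excursion is a single vertex, adding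
it to `J` yields a smaller handle. If it is longer, weak chordality yields a vertex of `J` adjacent
to the whole excursion (`WeaklyChordal.exists_common_neighbor`), and this vertex closes the
excursion to an induced cycle of the complement.
-/

lemma exists_embedding_of_forall_lt {α V : Type*} [LinearOrder α] {H : SimpleGraph α}
    {G : SimpleGraph V} (f : α → V) (hne : ∀ i j, i < j → f i ≠ f j)
    (hadj : ∀ i j, i < j → (G.Adj (f i) (f j) ↔ H.Adj i j)) : ∃ e : H ↪g G, ⇑e = f := by
  have hinj : Function.Injective f := fun i j hij ↦ by
    by_contra h
    rcases lt_or_gt_of_ne h with h | h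
    · exact hne i j h hij
    · exact hne j i h hij.symm
  refine ⟨⟨⟨f, hinj⟩, fun {i j} ↦ ?_⟩, rfl⟩
  rcases lt_trichotomy i j with h | rfl | h
  · exact hadj i j h
  · simp only [SimpleGraph.irrefl]
  · rw [G.adj_comm, H.adj_comm]
    exact hadj j i h

lemma cycleGraph_adj_of_lt {n : ℕ} {i j : Fin n} (hij : i < j) :
    (cycleGraph n).Adj i j ↔ (j : ℕ) = i + 1 ∨ (i : ℕ) = 0 ∧ (j : ℕ) + 1 = n := by
  rw [cycleGraph_adj', Fin.coe_sub_iff_lt.2 hij, Fin.sub_val_of_le hij.le]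
  omega

lemma exists_gap {P : ℕ → Prop} {a b k : ℕ} (hak : a < k) (hkb : k < b) (ha : P a) (hb : P b)
    (hk : ¬ P k) :
    ∃ c d, c < k ∧ k < d ∧ d ≤ b ∧ P c ∧ P d ∧ ∀ i, c < i → i < d → ¬ P i := by
  classical
  have hd : ∃ d, k < d ∧ P d := ⟨b, hkb, hb⟩
  have hc := Nat.findGreatest_spec hak.le ha
  have hck : Nat.findGreatest P k < k :=
    (Nat.findGreatest_le k).lt_of_ne fun h ↦ hk (h ▸ hc)
  refine ⟨Nat.findGreatest P k, Nat.find hd, hck, (Nat.find_spec hd).1, Nat.find_min' hd ⟨hkb, hb⟩,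
    hc, (Nat.find_spec hd).2, fun i hci hid hi ↦ ?_⟩
  rcases le_or_gt i k with hik | hki
  · exact Nat.findGreatest_is_greatest hci hik hi
  · exact Nat.find_min hd hid ⟨hki, hi⟩

section InducedPaths

variable {V : Type*} {G : SimpleGraph V}

/-- The vertices `p 0, ..., p n` form, in this order, an induced path of `G`. Sequences are indexed
by `ℕ`, the values beyond `n` being irrelevant, so that paths are shifted and extended by
arithmetic on indices. -/
structure IsInducedPath (G : SimpleGraph V) (p : ℕ → V) (n : ℕ) : Prop where
  ne : ∀ i j, i < j → j ≤ n → p i ≠ p j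
  adj_iff : ∀ i j, i < j → j ≤ n → (G.Adj (p i) (p j) ↔ j = i + 1)

/-- The sequence `w, p 0, p 1, ...`. -/
def prepend (w : V) (p : ℕ → V) : ℕ → V
  | 0 => w
  | i + 1 => p i

namespace IsInducedPath

variable {p : ℕ → V} {n : ℕ}

lemma take (hp : IsInducedPath G p n) {m : ℕ} (hmn : m ≤ n) : IsInducedPath G p m where
  ne i j hij hj := hp.ne i j hij (hj.trans hmn)
  adj_iff i j hij hj := hp.adj_iff i j hij (hj.trans hmn)

lemma shift (hp : IsInducedPath G p n) {a m : ℕ} (ham : a + m ≤ n) :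
    IsInducedPath G (fun i ↦ p (a + i)) m where
  ne i j hij hj := hp.ne _ _ (by omega) (by omega)
  adj_iff i j hij hj := by rw [hp.adj_iff _ _ (by omega) (by omega)]; omega

lemma adj_succ (hp : IsInducedPath G p n) {i : ℕ} (hi : i < n) : G.Adj (p i) (p (i + 1)) :=
  (hp.adj_iff i (i + 1) i.lt_succ_self hi).2 rfl

lemma of_compl_adj_iff (hp : IsInducedPath Gᶜ p n) {i j : ℕ} (hij : i < j) (hj : j ≤ n) :
    G.Adj (p i) (p j) ↔ j ≠ i + 1 := by
  have hne := hp.ne i j hij hj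
  have hadj := hp.adj_iff i j hij hj
  rw [compl_adj] at hadj
  tauto

lemma restrict_compl (hp : IsInducedPath Gᶜ p n) {S : Set V} (hS : ∀ i ≤ n, p i ∈ S) :
    IsInducedPath (G.induce S)ᶜ (fun i ↦ ⟨p (min i n), hS _ (min_le_right i n)⟩) n where
  ne i j hij hj h := hp.ne i j hij hj <| by
    simpa only [min_eq_left (hij.le.trans hj), min_eq_left hj] using congrArg Subtype.val h
  adj_iff i j hij hj := by
    simpa [min_eq_left (hij.le.trans hj), min_eq_left hj] using hp.adj_iff i j hij hj

-- For `n = 1` the new vertex could coincide with `p 1`.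
lemma cons (hp : IsInducedPath G p n) (hn : 2 ≤ n) {w : V}
    (hw : ∀ i ≤ n, G.Adj w (p i) ↔ i = 0) : IsInducedPath G (prepend w p) (n + 1) where
  ne
    | 0, 0, hij, _ => absurd hij (lt_irrefl 0)
    | 0, j + 1, _, hj => by
      intro (heq : w = p j)
      have h0 : G.Adj (p j) (p 0) := heq ▸ (hw 0 (by omega)).2 rfl
      obtain rfl : j = 1 := by
        rcases Nat.eq_zero_or_pos j with rfl | hj0
        · exact (h0.ne rfl).elim
        · exact (hp.adj_iff 0 j hj0 (by omega)).1 h0.symm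
      exact absurd ((hw 2 hn).1 (heq ▸ hp.adj_succ hn)) two_ne_zero
    | i + 1, j + 1, hij, hj => hp.ne i j (by omega) (by omega)
  adj_iff
    | 0, 0, hij, _ => absurd hij (lt_irrefl 0)
    | 0, j + 1, _, hj => by simpa [prepend] using hw j (by omega)
    | i + 1, j + 1, hij, hj => by simpa [prepend] using hp.adj_iff i j (by omega) (by omega)

end IsInducedPath

lemma hasInducedPath_iff {u v : V} {n : ℕ} :
    HasInducedPath G u v n ↔ ∃ p, IsInducedPath G p n ∧ p 0 = u ∧ p n = v := by
  constructor
  · rintro ⟨f, rfl, rfl⟩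
    refine ⟨fun i ↦ f ⟨min i n, by omega⟩, ⟨fun i j hij hj ↦ f.injective.ne ?_,
      fun i j hij hj ↦ ?_⟩, by simp, congrArg f (Fin.ext (min_self n))⟩
    · simp only [ne_eq, Fin.mk.injEq]
      omega
    · simp only [f.map_adj_iff, pathGraph_adj]
      omega
  · rintro ⟨p, hp, rfl, rfl⟩
    obtain ⟨f, hf⟩ := exists_embedding_of_forall_lt (H := pathGraph (n + 1)) (G := G)
      (fun i ↦ p i) (fun i j hij ↦ hp.ne i j hij (by omega)) fun i j hij ↦ by
        rw [hp.adj_iff i j hij (by omega), pathGraph_adj]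
        omega
    exact ⟨f, by simp [hf], by simp [hf]⟩

lemma twoPair_iff {x y : V} :
    TwoPair G x y ↔
      Gᶜ.Adj x y ∧ ∀ p n, IsInducedPath G p n → p 0 = x → p n = y → n ≤ 2 := by
  simp only [TwoPair, hasInducedPath_iff, compl_adj, and_assoc]
  refine and_congr_right fun hne ↦ and_congr_right fun hadj ↦
    ⟨fun h p n hp h0 hn ↦ (h n ⟨p, hp, h0, hn⟩).le, ?_⟩
  rintro h n ⟨p, hp, rfl, rfl⟩
  have hle := h p n hp rfl rfl
  interval_cases n
  · exact absurd rfl hne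
  · exact absurd (hp.adj_succ one_pos) hadj
  · rfl

end InducedPaths

section Holes

variable {V : Type*} {G : SimpleGraph V}

lemma hasInducedCycle_of_adj_iff {c : ℕ → V} {n : ℕ} (hn : 5 ≤ n)
    (hc : ∀ i j, i < j → j < n → (G.Adj (c i) (c j) ↔ j = i + 1 ∨ i = 0 ∧ j + 1 = n)) :
    HasInducedCycle G n := by
  -- Distinct vertices of a cycle of length at least five have distinct neighbourhoods.
  have hne : ∀ i j, i < j → j < n → c i ≠ c j := by
    intro i j hij hj heq
    have hloop := hc i j hij hj
    have hsucc := hc i (i + 1) (by omega) (by omega)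
    simp only [heq, SimpleGraph.irrefl, true_or, iff_true, false_iff] at hloop hsucc
    have hj2 : j = i + 2 := by
      have := (hc (i + 1) j (by omega) hj).1 hsucc.symm
      omega
    rcases Nat.eq_zero_or_pos i with rfl | hi
    · have h := (hc 0 (n - 1) (by omega) (by omega)).2 (by omega)
      rw [heq, hc j (n - 1) (by omega) (by omega)] at h
      omega
    · have h := (hc (i - 1) i (by omega) (by omega)).2 (by omega)
      rw [heq, hc (i - 1) j (by omega) (by omega)] at h
      omega
  obtain ⟨f, -⟩ := exists_embedding_of_forall_lt (H := cycleGraph n) (G := G) (fun i ↦ c i)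
    (fun i j hij ↦ hne i j hij j.isLt) fun i j hij ↦ by
      rw [hc i j hij j.isLt, cycleGraph_adj_of_lt hij]
  exact ⟨f⟩

namespace IsInducedPath

lemma hasInducedCycle_add_two_of_adj_ends {p : ℕ → V} {m : ℕ} (hp : IsInducedPath G p m)
    (hm : 3 ≤ m) {w : V} (hw : ∀ i ≤ m, G.Adj w (p i) ↔ i = 0 ∨ i = m) :
    HasInducedCycle G (m + 2) := by
  refine hasInducedCycle_of_adj_iff (c := prepend w p) (by omega) fun i j hij hj ↦ ?_
  obtain ⟨j, rfl⟩ := Nat.exists_eq_add_one_of_ne_zero (Nat.ne_zero_of_lt hij)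
  rcases i with _ | i
  · simp only [prepend, hw j (by omega), true_and]
    omega
  · simp only [prepend, hp.adj_iff i j (by omega) (by omega)]
    omega

lemma hasInducedCycle_glue {p q : ℕ → V} {m k : ℕ} (hp : IsInducedPath G p m)
    (hq : IsInducedPath G q k) (hm : 2 ≤ m) (hk : 2 ≤ k) (hmk : 5 ≤ m + k)
    (hfirst : p 0 = q 0) (hlast : p m = q k)
    (hpq : ∀ i j, 0 < i → i < m → 0 < j → j < k → ¬ G.Adj (p i) (q j)) :
    HasInducedCycle G (m + k) := by
  refine hasInducedCycle_of_adj_iff (c := fun i ↦ if i ≤ m then p i else q (m + k - i)) hmk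
    fun i j hij hj ↦ ?_
  rcases le_or_gt j m with hjm | hjm
  · simp only [hjm, hij.le.trans hjm, if_true, hp.adj_iff i j hij hjm]
    omega
  rcases lt_or_ge m i with hmi | him
  · simp only [hjm.not_ge, hmi.not_ge, if_false]
    rw [G.adj_comm, hq.adj_iff _ _ (by omega) (by omega)]
    omega
  simp only [hjm.not_ge, him, if_true, if_false]
  rcases Nat.eq_zero_or_pos i with rfl | hi
  · rw [hfirst, hq.adj_iff _ _ (by omega) (by omega)]
    omega
  rcases him.eq_or_lt with rfl | him
  · rw [hlast, G.adj_comm, hq.adj_iff _ _ (by omega) (by omega)]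
    omega
  · have := hpq i (m + k - j) hi him (by omega) (by omega)
    simp only [this, false_iff]
    omega

lemma hasInducedCycle_add_three_of_adj_ends {p : ℕ → V} {m : ℕ} (hp : IsInducedPath G p m)
    (hm : 2 ≤ m) {w z : V} (hw : ∀ i ≤ m, G.Adj w (p i) ↔ i = 0)
    (hz : ∀ i ≤ m, G.Adj z (p i) ↔ i = m) (hzw : G.Adj z w) : HasInducedCycle G (m + 3) := by
  refine (hp.cons hm hw).hasInducedCycle_add_two_of_adj_ends (w := z) (by omega) ?_
  rintro (_ | i) hi
  · simpa [prepend] using hzw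
  · simpa [prepend] using hz i (by omega)

lemma exists_hasInducedCycle_of_common_neighbor {t : ℕ → V} {m : ℕ} (ht : IsInducedPath G t m)
    (hm : 2 ≤ m) {a b w : V} (ha : ∀ i ≤ m, G.Adj a (t i) ↔ i = 0)
    (hb : ∀ i ≤ m, G.Adj b (t i) ↔ i = m) (hab : ¬ G.Adj a b) (hwa : G.Adj w a)
    (hwb : G.Adj w b) (hwt : ∀ i < m, ¬ G.Adj w (t i)) : ∃ n, 5 ≤ n ∧ HasInducedCycle G n := by
  have hat : IsInducedPath G (prepend a t) (m + 1) := ht.cons hm ha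
  by_cases hwm : G.Adj w (t m)
  · refine ⟨m + 3, by omega, hat.hasInducedCycle_add_two_of_adj_ends (w := w) (by omega) ?_⟩
    rintro (_ | i) hi
    · simpa [prepend] using hwa
    · rcases (Nat.le_of_succ_le_succ hi).eq_or_lt with rfl | hi
      · simpa [prepend] using hwm
      · simpa [prepend, hi.ne] using hwt i hi
  · refine ⟨m + 4, by omega, hat.hasInducedCycle_add_three_of_adj_ends (w := w) (z := b)
      (by omega) ?_ ?_ hwb.symm⟩
    · rintro (_ | i) hi
      · simpa [prepend] using hwa
      · rcases (Nat.le_of_succ_le_succ hi).eq_or_lt with rfl | hi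
        · simpa [prepend] using hwm
        · simpa [prepend] using hwt i hi
    · rintro (_ | i) hi
      · simpa [prepend] using fun hba ↦ hab hba.symm
      · simpa [prepend] using hb i (by omega)

end IsInducedPath

end Holes

section ShortestPaths

variable {V : Type*} {G : SimpleGraph V}

lemma isInducedPath_getVert {u v : V} {p : G.Walk u v} (hp : p.length = G.dist u v) :
    IsInducedPath G p.getVert p.length where
  ne i j hij hj h :=
    hij.ne ((p.isPath_of_length_eq_dist hp).getVert_injOn (hij.le.trans hj) hj h)
  adj_iff i j hij hj := by
    constructor
    · intro h
      have hle := dist_le ((p.take i).append (.cons h (p.drop j)))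
      simp only [Walk.length_append, Walk.length_cons, p.take_length, p.drop_length] at hle
      omega
    · rintro rfl
      exact p.adj_getVert_succ hj

lemma dist_getVert_le {u v : V} (p : G.Walk u v) {i j : ℕ} (hij : i ≤ j) :
    G.dist (p.getVert i) (p.getVert j) ≤ j - i := by
  have hle := dist_le ((p.drop i).take (j - i))
  rw [Walk.take_length, Walk.drop_getVert, Nat.add_sub_cancel' hij] at hle
  exact hle.trans (min_le_left _ _)

lemma exists_inducedPath_between {A B J : Set V} (hJ : (G.induce J).Connected)
    (hA : (A ∩ J).Nonempty) (hB : (B ∩ J).Nonempty) :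
    ∃ q n, IsInducedPath G q n ∧ (∀ i ≤ n, q i ∈ J) ∧ q 0 ∈ A ∧ q n ∈ B ∧
      ∀ i j, i ≤ j → j ≤ n → q i ∈ A → q j ∈ B → i = 0 ∧ j = n := by
  let T : Set (J × J) := {uv | uv.1.1 ∈ A ∧ uv.2.1 ∈ B}
  have hT : T.Nonempty := by
    obtain ⟨⟨a, haA, haJ⟩, b, hbB, hbJ⟩ := hA, hB
    exact ⟨(⟨a, haJ⟩, ⟨b, hbJ⟩), haA, hbB⟩
  obtain ⟨⟨u, v⟩, ⟨huA, hvB⟩, hmin⟩ :=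
    exists_minimalFor_of_wellFoundedLT (· ∈ T) (fun uv ↦ (G.induce J).dist uv.1 uv.2) hT
  obtain ⟨p, hp⟩ := (hJ u v).exists_walk_length_eq_dist
  have hind := isInducedPath_getVert hp
  refine ⟨fun i ↦ p.getVert i, p.length, ⟨fun i j hij hj h ↦ hind.ne i j hij hj (Subtype.ext h),
    hind.adj_iff⟩, fun i _ ↦ (p.getVert i).2, by simpa using huA, by simpa using hvB,
    fun i j hij hj hi hj' ↦ ?_⟩
  have hdist := dist_getVert_le p hij
  have hlen := hmin (j := (p.getVert i, p.getVert j)) ⟨hi, hj'⟩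
  simp only [← hp] at hlen
  omega

lemma connected_induce_insert {S : Set V} (hS : (G.induce S).Connected) {x a : V} (ha : a ∈ S)
    (hxa : G.Adj x a) : (G.induce (insert x S)).Connected :=
  connected_induce_union (s := {x}) (.of_subsingleton (V := ({x} : Set V))) hS.preconnected rfl ha
    hxa

lemma connected_induce_image_Icc {q : ℕ → V} {i j : ℕ} (hij : i ≤ j)
    (hq : ∀ k, i ≤ k → k < j → G.Adj (q k) (q (k + 1))) :
    (G.induce (q '' Set.Icc i j)).Connected := by
  induction j, hij using Nat.le_induction with
  | base =>
    rw [Set.Icc_self, Set.image_singleton]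
    exact .of_subsingleton (V := ({q i} : Set V))
  | succ j hij ih =>
    rw [← Set.insert_Icc_right_eq_Icc_add_one (by omega), Set.image_insert_eq]
    exact connected_induce_insert (ih fun k hik hkj ↦ hq k hik (by omega))
      (Set.mem_image_of_mem q ⟨hij, le_rfl⟩) (hq j hij j.lt_succ_self).symm

lemma exists_inducedPath_through {J : Set V} (hJ : (G.induce J).Connected) {x y : V}
    (hx : ∃ a ∈ J, G.Adj x a) (hy : ∃ a ∈ J, G.Adj y a) :
    ∃ p n, IsInducedPath G p n ∧ p 0 = x ∧ p n = y ∧ ∀ i, 0 < i → i < n → p i ∈ J := by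
  obtain ⟨⟨a, haJ, hxa⟩, b, hbJ, hyb⟩ := hx, hy
  have hxyJ : (G.induce (insert y (insert x J))).Connected :=
    connected_induce_insert (connected_induce_insert hJ haJ hxa) (Set.mem_insert_of_mem x hbJ) hyb
  obtain ⟨p, n, hp, hpJ, h0, hn, hmin⟩ := exists_inducedPath_between (A := {x}) (B := {y}) hxyJ
    ⟨x, rfl, by simp⟩ ⟨y, rfl, by simp⟩
  refine ⟨p, n, hp, h0, hn, fun i hi hin ↦ ?_⟩
  rcases hpJ i hin.le with h | h | h
  · exact absurd (hmin 0 i hi.le hin.le h0 h).2 hin.ne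
  · exact absurd (hmin i n hin.le le_rfl h hn).1 hi.ne'
  · exact h

lemma exists_common_neighbor_of_not_adj (hG : ∀ n, 5 ≤ n → ¬ HasInducedCycle G n) {J H : Set V}
    (hJ : (G.induce J).Connected) (hH : (G.induce H).Connected)
    (hJH : Gᶜ.IsCompleteBetween J H) {x y : V} (hxy : Gᶜ.Adj x y)
    (hxJ : ∃ a ∈ J, G.Adj x a) (hyJ : ∃ a ∈ J, G.Adj y a)
    (hxH : ∃ a ∈ H, G.Adj x a) (hyH : ∃ a ∈ H, G.Adj y a) :
    ∃ a ∈ J, G.Adj x a ∧ G.Adj y a := by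
  have two_le : ∀ {p n}, IsInducedPath G p n → p 0 = x → p n = y → 2 ≤ n := by
    rintro p n hp rfl rfl
    by_contra! hn
    interval_cases n
    · exact hxy.ne rfl
    · exact hxy.2 (hp.adj_succ one_pos)
  obtain ⟨p, m, hp, hp0, hpm, hpJ⟩ := exists_inducedPath_through hJ hxJ hyJ
  obtain ⟨q, k, hq, hq0, hqk, hqH⟩ := exists_inducedPath_through hH hxH hyH
  have hk := two_le hq hq0 hqk
  rcases (two_le hp hp0 hpm).eq_or_lt with rfl | hm
  · exact ⟨p 1, hpJ 1 one_pos one_lt_two, hp0 ▸ hp.adj_succ two_pos,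
      hpm ▸ (hp.adj_succ one_lt_two).symm⟩
  · exact absurd (hp.hasInducedCycle_glue hq hm.le hk (by omega) (hp0.trans hq0.symm)
      (hpm.trans hqk.symm) fun i j hi him hj hjk ↦ (hJH (hpJ i hi him) (hqH j hj hjk)).2)
      (hG _ (by omega))

end ShortestPaths

section CommonNeighbor

variable {V : Type*} {G : SimpleGraph V}

lemma exists_crossing_path {J : Set V} (hJ : (G.induce J).Connected) {t : ℕ → V} {m : ℕ}
    (hinit : ∀ K ⊆ J, (G.induce K).Connected → (∀ i ≤ m, ∃ a ∈ K, G.Adj (t i) a) →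
      ∃ a ∈ K, ∀ i ≤ m, G.Adj (t i) a)
    (htail : ∀ K ⊆ J, (G.induce K).Connected → (∀ i ≤ m, ∃ a ∈ K, G.Adj (t (i + 1)) a) →
      ∃ a ∈ K, ∀ i ≤ m, G.Adj (t (i + 1)) a)
    (htJ : ∀ i ≤ m + 1, ∃ a ∈ J, G.Adj (t i) a) :
    ∃ q n, IsInducedPath G q n ∧ (∀ i ≤ n, q i ∈ J) ∧
      (∀ i ≤ m, G.Adj (t (i + 1)) (q 0)) ∧ (∀ i ≤ m, G.Adj (t i) (q n)) ∧
      (∀ i ≤ n, G.Adj (t 0) (q i) ↔ i = n) ∧ (∀ i ≤ n, G.Adj (t (m + 1)) (q i) ↔ i = 0) := by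
  obtain ⟨a, haJ, ha⟩ := htail J subset_rfl hJ fun i hi ↦ htJ (i + 1) (by omega)
  obtain ⟨b, hbJ, hb⟩ := hinit J subset_rfl hJ fun i hi ↦ htJ i (by omega)
  obtain ⟨q, n, hq, hqJ, hq0, hqn, hmin⟩ := exists_inducedPath_between hJ
    (A := {v | ∀ i ≤ m, G.Adj (t (i + 1)) v}) (B := {v | ∀ i ≤ m, G.Adj (t i) v})
    ⟨a, ha, haJ⟩ ⟨b, hb, hbJ⟩
  have subset : ∀ i j, j ≤ n → q '' Set.Icc i j ⊆ J := by
    rintro i j hj _ ⟨k, hk, rfl⟩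
    exact hqJ k (hk.2.trans hj)
  refine ⟨q, n, hq, hqJ, hq0, hqn, fun i hi ↦ ⟨fun hadj ↦ ?_, ?_⟩, fun i hi ↦ ⟨fun hadj ↦ ?_, ?_⟩⟩
  · obtain ⟨_, ⟨j, hj, rfl⟩, hjB⟩ := hinit (q '' Set.Icc 0 i) (subset 0 i hi)
      (connected_induce_image_Icc i.zero_le fun k _ hk ↦ hq.adj_succ (by omega)) <| by
        rintro (_ | k) hk
        · exact ⟨q i, ⟨i, by simp, rfl⟩, hadj⟩
        · exact ⟨q 0, ⟨0, by simp, rfl⟩, hq0 k (by omega)⟩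
    have := (hmin 0 j hj.1 (hj.2.trans hi) hq0 hjB).2
    have := hj.2
    omega
  · rintro rfl
    exact hqn 0 m.zero_le
  · obtain ⟨_, ⟨j, hj, rfl⟩, hjA⟩ := htail (q '' Set.Icc i n) (subset i n le_rfl)
      (connected_induce_image_Icc hi fun k _ hk ↦ hq.adj_succ hk) fun k hk ↦ by
        rcases hk.eq_or_lt with rfl | hk
        · exact ⟨q i, ⟨i, by simp [hi], rfl⟩, hadj⟩
        · exact ⟨q n, ⟨n, by simp [hi], rfl⟩, hqn (k + 1) hk⟩
    have := (hmin j n hj.2 le_rfl hjA hqn).1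
    have := hj.1
    omega
  · rintro rfl
    exact hq0 m le_rfl

namespace WeaklyChordal

lemma crossing_path_length_eq_zero (hG : WeaklyChordal G) {t q : ℕ → V} {m n : ℕ}
    (hm : 2 ≤ m) (ht : IsInducedPath Gᶜ t m) (hq : IsInducedPath G q n)
    (hq0 : ∀ i, 0 < i → i ≤ m → G.Adj (t i) (q 0)) (hqn : ∀ i < m, G.Adj (t i) (q n))
    (ht0 : ∀ i ≤ n, G.Adj (t 0) (q i) ↔ i = n) (htm : ∀ i ≤ n, G.Adj (t m) (q i) ↔ i = 0)
    {w : V} (htw : ∀ i < m, G.Adj (t i) w) (hqw : ∀ i ≤ n, Gᶜ.Adj w (q i))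
    (hqt : ∀ i ≤ n, ∀ j ≤ m, q i ≠ t j) : n = 0 := by
  by_contra hn0
  -- For `n ≥ 2` the vertices `t m` and `t 0` close `q` to an induced cycle.
  have hn1 : n = 1 := by
    by_contra hn1
    exact hG.1 _ (by omega) (hq.hasInducedCycle_add_three_of_adj_ends (by omega) htm ht0
      ((ht.of_compl_adj_iff (by omega) le_rfl).2 (by omega)))
  subst hn1
  -- For `n = 1` the vertex `w` closes the path `q 0, t 0, ..., t m, q 1` of the complement to an
  -- induced cycle, possibly cutting off `q 1`.
  have hadj0 : ∀ i ≤ m, Gᶜ.Adj (q 0) (t i) ↔ i = 0 := by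
    intro i hi
    rw [compl_adj, and_iff_right (hqt 0 zero_le_one i hi), G.adj_comm]
    rcases Nat.eq_zero_or_pos i with rfl | hi0
    · simp [ht0]
    · simp [hq0 i hi0 hi, hi0.ne']
  have hadj1 : ∀ i ≤ m, Gᶜ.Adj (q 1) (t i) ↔ i = m := by
    intro i hi
    rw [compl_adj, and_iff_right (hqt 1 le_rfl i hi), G.adj_comm]
    rcases hi.eq_or_lt with rfl | him
    · simp [htm]
    · simp [hqn i him, him.ne]
  obtain ⟨k, hk, hcycle⟩ := ht.exists_hasInducedCycle_of_common_neighbor hm hadj0 hadj1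
    (fun hadj ↦ hadj.2 (hq.adj_succ one_pos)) (hqw 0 zero_le_one) (hqw 1 le_rfl)
    fun i hi hadj ↦ hadj.2 (htw i hi).symm
  exact hG.2 k hk hcycle

lemma exists_common_neighbor (hG : WeaklyChordal G) {t : ℕ → V} {m : ℕ}
    (ht : IsInducedPath Gᶜ t m) {J H : Set V} (hJ : (G.induce J).Connected)
    (hH : (G.induce H).Connected) (hJH : Gᶜ.IsCompleteBetween J H)
    (htJ : ∀ i ≤ m, ∃ a ∈ J, G.Adj (t i) a) (htH : ∀ i ≤ m, ∃ a ∈ H, G.Adj (t i) a) :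
    ∃ a ∈ J, ∀ i ≤ m, G.Adj (t i) a := by
  induction m generalizing t J H with
  | zero => simpa using htJ
  | succ m ih =>
    rcases Nat.eq_zero_or_pos m with rfl | hm
    · obtain ⟨a, haJ, h0, h1⟩ := exists_common_neighbor_of_not_adj hG.1 hJ hH hJH
        (ht.adj_succ one_pos) (htJ 0 zero_le_one) (htJ 1 le_rfl) (htH 0 zero_le_one) (htH 1 le_rfl)
      exact ⟨a, haJ, fun i hi ↦ by interval_cases i <;> assumption⟩
    have htail : IsInducedPath Gᶜ (fun i ↦ t (i + 1)) m := by
      simpa only [add_comm] using ht.shift (a := 1) (by omega)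
    obtain ⟨q, n, hq, hqJ, hq0, hqn, ht0, htm⟩ := exists_crossing_path hJ (t := t) (m := m)
      (fun K hKJ hK htK ↦ ih (ht.take m.le_succ) hK hH (fun _ ha ↦ hJH (hKJ ha)) htK
        fun i hi ↦ htH i (by omega))
      (fun K hKJ hK htK ↦ ih htail hK hH (fun _ ha ↦ hJH (hKJ ha)) htK
        fun i hi ↦ htH (i + 1) (by omega)) htJ
    obtain ⟨w, hwH, htw⟩ := ih (ht.take m.le_succ) hH hJ hJH.symm
      (fun i hi ↦ htH i (by omega)) fun i hi ↦ htJ i (by omega)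
    have hqt : ∀ i ≤ n, ∀ j ≤ m + 1, q i ≠ t j := by
      intro i hi j hj hij
      obtain ⟨a, haH, ha⟩ := htH j hj
      exact (hJH (hqJ i hi) haH).2 (hij ▸ ha)
    obtain rfl := hG.crossing_path_length_eq_zero (by omega) ht hq
      (fun i hi0 hi ↦ Nat.sub_add_cancel hi0 ▸ hq0 (i - 1) (by omega))
      (fun i hi ↦ hqn i (by omega)) ht0 htm (fun i hi ↦ htw i (by omega))
      (fun i hi ↦ (hJH (hqJ i hi) hwH).symm) hqt
    refine ⟨q 0, hqJ 0 le_rfl, ?_⟩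
    rintro (_ | i) hi
    · exact hqn 0 m.zero_le
    · exact hq0 i (by omega)

end WeaklyChordal

end CommonNeighbor

section Components

variable {V : Type*} {G : SimpleGraph V}

/-- The vertices lying outside `S` and having no neighbor in `S`. -/
def far (G : SimpleGraph V) (S : Set V) : Set V :=
  {v | ∀ a ∈ S, Gᶜ.Adj v a}

/-- `K` is a connected component of the subgraph of `G` induced by `C`. -/
def IsComponentIn (G : SimpleGraph V) (C K : Set V) : Prop :=
  Maximal (fun S ↦ S ⊆ C ∧ (G.induce S).Connected) K

lemma far_antitone {S T : Set V} (hST : S ⊆ T) : far G T ⊆ far G S :=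
  fun _ hv a ha ↦ hv a (hST ha)

lemma mem_far_pair {v x y : V} : v ∈ far G {x, y} ↔ Gᶜ.Adj v x ∧ Gᶜ.Adj v y := by
  simp [far]

lemma subset_far_comm {S T : Set V} : S ⊆ far G T ↔ T ⊆ far G S :=
  ⟨fun h _ hb _ ha ↦ (h ha _ hb).symm, fun h _ hb _ ha ↦ (h ha _ hb).symm⟩

lemma exists_isComponentIn {C : Set V} {v : V} (hv : v ∈ C) :
    ∃ K, IsComponentIn G C K ∧ v ∈ K := by
  let F : Set (Set V) := {S | v ∈ S ∧ S ⊆ C ∧ (G.induce S).Connected}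
  have hvF : {v} ∈ F :=
    ⟨rfl, Set.singleton_subset_iff.2 hv, .of_subsingleton (V := ({v} : Set V))⟩
  refine ⟨⋃₀ F, ⟨⟨Set.sUnion_subset fun S hS ↦ hS.2.1,
    induce_sUnion_connected_of_pairwise_not_disjoint ⟨_, hvF⟩
      (fun hS hT ↦ ⟨v, hS.1, hT.1⟩) fun hS ↦ hS.2.2⟩, fun S hS hFS ↦ ?_⟩, {v}, hvF, rfl⟩
  exact Set.subset_sUnion_of_mem ⟨hFS ⟨{v}, hvF, rfl⟩, hS⟩

namespace IsComponentIn

variable {C K : Set V}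

lemma subset (hK : IsComponentIn G C K) : K ⊆ C := hK.prop.1

lemma connected (hK : IsComponentIn G C K) : (G.induce K).Connected := hK.prop.2

lemma subset_of_connected (hK : IsComponentIn G C K) {S : Set V} (hSC : S ⊆ C)
    (hS : (G.induce S).Connected) (hSK : (S ∩ K).Nonempty) : S ⊆ K :=
  Set.subset_union_left.trans <| hK.2 ⟨Set.union_subset hSC hK.subset,
    induce_union_connected hS.preconnected hK.connected.preconnected hSK⟩ Set.subset_union_right

lemma mem_of_adj (hK : IsComponentIn G C K) {u w : V} (hu : u ∈ C) (hw : w ∈ K)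
    (hadj : G.Adj u w) : u ∈ K :=
  hK.subset_of_connected (Set.insert_subset hu (Set.singleton_subset_iff.2 (hK.subset hw)))
    (induce_pair_connected_of_adj hadj) ⟨w, by simp, hw⟩ (Set.mem_insert u {w})

end IsComponentIn

end Components

section Handles

variable {V : Type*} {G : SimpleGraph V} {H J : Set V}

/-- A handle of `G`: a component `H`, having at least one edge, of the part of `G` far from some
connected set `J`. -/
structure IsHandle (G : SimpleGraph V) (H J : Set V) : Prop where
  connected : (G.induce J).Connected
  isComponentIn : IsComponentIn G (far G J) H
  exists_adj : ∃ x ∈ H, ∃ y ∈ H, G.Adj x y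

lemma exists_isHandle {x y : V} (hxy : G.Adj x y) (hJ : IsComponentIn G (far G {x, y}) J) :
    ∃ H, IsHandle G H J ∧ x ∈ H := by
  have hfar := subset_far_comm.1 hJ.subset
  obtain ⟨H, hH, hx⟩ := exists_isComponentIn (G := G) (hfar (Set.mem_insert x {y}))
  exact ⟨H, ⟨hJ.connected, hH, x, hx, y,
    hH.mem_of_adj (hfar (by simp)) hx hxy.symm, hxy⟩, hx⟩

namespace IsHandle

lemma isCompleteBetween (h : IsHandle G H J) : Gᶜ.IsCompleteBetween J H :=
  fun _ ha _ hb ↦ (h.isComponentIn.subset hb _ ha).symm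

lemma exists_adj_of_adj (h : IsHandle G H J) {u w : V} (hu : u ∉ H) (hw : w ∈ H)
    (hadj : G.Adj u w) : ∃ a ∈ J, G.Adj u a := by
  by_contra! hJ
  refine hu (h.isComponentIn.mem_of_adj (fun a ha ↦ ?_) hw hadj)
  refine (compl_adj ..).2 ⟨?_, hJ a ha⟩
  rintro rfl
  exact (h.isCompleteBetween ha hw).2 hadj

lemma exists_ssubset (h : IsHandle G H J) {x y n : V} (hx : x ∈ H) (hy : y ∈ H)
    (hxy : G.Adj x y) (hn : n ∉ H) (hnH : ∃ w ∈ H, G.Adj n w) (hnxy : n ∈ far G {x, y}) :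
    ∃ H' J', IsHandle G H' J' ∧ H' ⊂ H := by
  obtain ⟨J', hJ', hnJ'⟩ := exists_isComponentIn (G := G) hnxy
  obtain ⟨H', h', hxH'⟩ := exists_isHandle hxy hJ'
  obtain ⟨w, hwH, hnw⟩ := hnH
  have hJfar : J ⊆ far G {x, y} :=
    (subset_far_comm.1 h.isComponentIn.subset).trans
      (far_antitone (Set.insert_subset hx (Set.singleton_subset_iff.2 hy)))
  have hJJ' : J ⊆ J' := by
    obtain ⟨a, haJ, hna⟩ := h.exists_adj_of_adj hn hwH hnw
    exact hJ'.subset_of_connected hJfar h.connected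
      ⟨a, haJ, hJ'.mem_of_adj (hJfar haJ) hnJ' hna.symm⟩
  have hH'H : H' ⊆ H := h.isComponentIn.subset_of_connected
    (h'.isComponentIn.subset.trans (far_antitone hJJ')) h'.isComponentIn.connected ⟨x, hxH', hx⟩
  exact ⟨H', J', h', hH'H, fun hHH' ↦ (h'.isCompleteBetween hnJ' (hHH' hwH)).2 hnw⟩

lemma exists_ssubset_of_inducedPath (hG : WeaklyChordal G) (h : IsHandle G H J) {p : ℕ → V} {n : ℕ}
    (hp : IsInducedPath Gᶜ p n) (hn : 2 ≤ n) (hp0 : p 0 ∈ H) (hpn : p n ∈ H)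
    (hout : ∀ i, 0 < i → i < n → p i ∉ H)
    (hnbr : ∀ i, 0 < i → i < n → ∃ w ∈ H, G.Adj (p i) w) :
    ∃ H' J', IsHandle G H' J' ∧ H' ⊂ H := by
  rcases hn.eq_or_lt with rfl | hn
  · exact h.exists_ssubset hp0 hpn ((hp.of_compl_adj_iff two_pos le_rfl).2 (by simp))
      (hout 1 one_pos one_lt_two) (hnbr 1 one_pos one_lt_two)
      (mem_far_pair.2 ⟨(hp.adj_succ two_pos).symm, hp.adj_succ one_lt_two⟩)
  obtain ⟨n, rfl⟩ := Nat.exists_eq_add_of_le' hn.le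
  obtain ⟨a, haJ, ha⟩ := hG.exists_common_neighbor (hp.shift (a := 1) (m := n) (by omega))
    h.connected h.isComponentIn.connected h.isCompleteBetween
    (fun i hi ↦ by
      obtain ⟨w, hw, hadj⟩ := hnbr (1 + i) (by omega) (by omega)
      exact h.exists_adj_of_adj (hout (1 + i) (by omega) (by omega)) hw hadj)
    fun i hi ↦ hnbr (1 + i) (by omega) (by omega)
  refine absurd (hp.hasInducedCycle_add_two_of_adj_ends (w := a) hn fun i hi ↦ ?_)
    (hG.2 _ (by omega))
  rcases Nat.eq_zero_or_pos i with rfl | hi0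
  · simpa using h.isCompleteBetween haJ hp0
  rcases hi.eq_or_lt with rfl | hin
  · simpa using h.isCompleteBetween haJ hpn
  · have hadj := ha (i - 1) (by omega)
    rw [Nat.add_sub_cancel' hi0] at hadj
    simp [compl_adj, hadj.symm, hi0.ne', hin.ne]

lemma twoPair_of_induce (hG : WeaklyChordal G) (h : IsHandle G H J)
    (hmin : ∀ H' J', IsHandle G H' J' → ¬ H' ⊂ H) {x y : H}
    (hxy : TwoPair (G.induce H)ᶜ x y) : TwoPair Gᶜ (x : V) y := by
  rw [twoPair_iff, compl_compl] at hxy ⊢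
  refine ⟨hxy.1, fun p n hp hp0 hpn ↦ ?_⟩
  by_contra! hn
  by_cases hpH : ∀ i ≤ n, p i ∈ H
  · exact hn.not_ge (hxy.2 _ n (hp.restrict_compl hpH) (Subtype.ext (by simpa))
      (Subtype.ext (by simpa)))
  push Not at hpH
  obtain ⟨k, hkn, hkH⟩ := hpH
  have hp0H : p 0 ∈ H := hp0 ▸ x.2
  have hpnH : p n ∈ H := hpn ▸ y.2
  have hk0 : 0 < k := Nat.pos_of_ne_zero (by rintro rfl; exact hkH hp0H)
  have hkn : k < n := hkn.lt_of_ne (by rintro rfl; exact hkH hpnH)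
  have hnbr : ∀ i, 0 < i → i < n → ∃ w ∈ H, G.Adj (p i) w := by
    intro i hi hin
    by_cases hi1 : i = 1
    · exact ⟨p n, hpnH, (hp.of_compl_adj_iff hin le_rfl).2 (by omega)⟩
    · exact ⟨p 0, hp0H, ((hp.of_compl_adj_iff hi hin.le).2 (by omega)).symm⟩
  obtain ⟨a, b, hak, hkb, hbn, haH, hbH, hout⟩ := exists_gap (P := (p · ∈ H)) hk0 hkn hp0H hpnH hkH
  obtain ⟨H', J', h', hlt⟩ := h.exists_ssubset_of_inducedPath hG
    (hp.shift (a := a) (m := b - a) (by omega)) (by omega) haH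
    (by rwa [Nat.add_sub_cancel' (by omega)]) (fun i hi hib ↦ hout _ (by omega) (by omega))
    fun i hi hib ↦ hnbr _ (by omega) (by omega)
  exact hmin H' J' h' hlt

end IsHandle

end Handles

lemma exists_isHandle_of_inducedPath {V : Type*} {G : SimpleGraph V} {p : ℕ → V} {n : ℕ}
    (hp : IsInducedPath Gᶜ p n) (hn : 2 ≤ n) : ∃ H J, IsHandle G H J := by
  obtain ⟨J, hJ, -⟩ := exists_isComponentIn (G := G)
    (mem_far_pair.2 ⟨(hp.adj_succ (i := 0) (by omega)).symm, hp.adj_succ (i := 1) (by omega)⟩)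
  obtain ⟨H, hH, -⟩ := exists_isHandle ((hp.of_compl_adj_iff two_pos hn).2 (by simp)) hJ
  exact ⟨H, J, hH⟩

namespace WeaklyChordal

lemma compl {V : Type*} {G : SimpleGraph V} (hG : WeaklyChordal G) : WeaklyChordal Gᶜ :=
  ⟨hG.2, (compl_compl G).symm ▸ hG.1⟩

lemma of_embedding {V W : Type*} {G : SimpleGraph V} {H : SimpleGraph W} (hG : WeaklyChordal G)
    (f : H ↪g G) : WeaklyChordal H :=
  ⟨fun n hn ⟨c⟩ ↦ hG.1 n hn ⟨f.comp c⟩, fun n hn ⟨c⟩ ↦ hG.2 n hn ⟨(Embedding.complEquiv f).comp c⟩⟩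

lemma exists_twoPair_compl {V : Type*} [Finite V] {G : SimpleGraph V} (hG : WeaklyChordal G)
    {x y : V} (hxy : G.Adj x y) : ∃ u v, TwoPair Gᶜ u v := by
  induction hc : Nat.card V using Nat.strong_induction_on generalizing V with
  | _ c ih =>
  subst hc
  by_cases hex : ∃ H J, IsHandle G H J
  · obtain ⟨H, ⟨J, h⟩, hmin⟩ := exists_minimal_of_wellFoundedLT _ hex
    obtain ⟨z, hz⟩ := h.connected.nonempty
    obtain ⟨a, haH, b, hbH, hab⟩ := h.exists_adj
    have hzH : z ∉ H := fun hzH ↦ (h.isCompleteBetween hz hzH).ne rfl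
    obtain ⟨u, v, huv⟩ := ih (Nat.card H) (Finite.card_subtype_lt hzH)
      (hG.of_embedding (Embedding.induce H)) (x := ⟨a, haH⟩) (y := ⟨b, hbH⟩) hab rfl
    exact ⟨u, v, h.twoPair_of_induce hG (fun H' J' h' hlt ↦ hlt.2 (hmin ⟨J', h'⟩ hlt.1)) huv⟩
  · refine ⟨x, y, twoPair_iff.2 ⟨by rwa [compl_compl], fun p n hp _ _ ↦ ?_⟩⟩
    by_contra! hn
    exact hex (exists_isHandle_of_inducedPath hp hn.le)

end WeaklyChordal

/-- Every weakly chordal graph that is not complete has a two-pair. -/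
theorem weaklyChordal_has_twoPair {V : Type*} [Fintype V] (G : SimpleGraph V)
    (hwc : WeaklyChordal G) (hnc : G ≠ ⊤) :
    ∃ u v, TwoPair G u v := by
  obtain ⟨x, y, hne, hxy⟩ := ne_top_iff_exists_not_adj.1 hnc
  simpa only [compl_compl] using hwc.compl.exists_twoPair_compl ((compl_adj ..).2 ⟨hne, hxy⟩)
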